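/- Let N ≥ 1, H ≥ 1, σ ≥ 0 and x be integers. Then Σ_{u=0}^{σ} C(σ, u) · |Δ^{(u)}(x, N, H)| < σ^σ · e^{N+H} · (1 + |x|/H)^N, where C(σ, u) is the binomial coefficient. -/

import Mathlib

/-!
Write `P = Δ(·, N, H)` and `y = |x|`. The polynomial `P` has nonnegative coefficients, so
`|P^{(u)}(x)| ≤ P^{(u)}(y) ≤ u! P(y + 1)`, the last step because `P^{(u)}(y) / u!` is one of the
nonnegative terms of the Taylor expansion of `P(y + 1)` at `y`
(`abs_eval_iterate_derivative_le`).

The remaining combinatorial factor is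
`∑ C(σ,u) u! = σ! ∑_{k ≤ σ} 1/k! < e σ! ≤ e σ^σ` (`sum_choose_mul_factorial_lt`).

Finally, for `k ≤ H`,
`(y+1)⋯(y+k)/k! ≤ (y+H)^k/k! = (H^k/k!) (1+y/H)^k ≤ e^H (1+y/H)^k` (`eval_block_le`).
Multiplying over the `q` full blocks and the last block gives
`P(y+1) ≤ e^{qH+H} (1+y/H)^N`, and `qH + 1 ≤ N` leaves room for the extra factor `e`.
-/

open Polynomial

/-- The rising factorial polynomial `z (z+1) ⋯ (z+k−1)`. -/
noncomputable def risingPoly (k : ℕ) : Polynomial ℚ :=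
  ∏ j ∈ Finset.range k, (Polynomial.X + Polynomial.C (j : ℚ))

/-- The binomial polynomial
`Δ(z, N, H) = (z(z+1)⋯(z+H−1)/H!)^q · z(z+1)⋯(z+r−1)/r!`, where `N = qH + r` with
`1 ≤ r ≤ H` (and `Δ(z, 0, H) = 1`). -/
noncomputable def binomPoly (N H : ℕ) : Polynomial ℚ :=
  if N = 0 then 1 else
    (Polynomial.C ((H.factorial : ℚ)⁻¹) * risingPoly H) ^ ((N - 1) / H) *
      (Polynomial.C (((N - ((N - 1) / H) * H).factorial : ℚ)⁻¹) *
        risingPoly (N - ((N - 1) / H) * H))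

/-- `ν(H)`: the least common multiple of `1, 2, …, H`. -/
def nuLcm (H : ℕ) : ℕ := (Finset.Icc 1 H).lcm id

/-- All coefficients of the polynomial are nonnegative. -/
def NonnegCoeffs (p : Polynomial ℚ) : Prop := ∀ n, 0 ≤ p.coeff n

lemma NonnegCoeffs.mul {p q : Polynomial ℚ} (hp : NonnegCoeffs p) (hq : NonnegCoeffs q) :
    NonnegCoeffs (p * q) := by
  intro n
  rw [Polynomial.coeff_mul]
  exact Finset.sum_nonneg fun i _ => mul_nonneg (hp _) (hq _)

lemma nonnegCoeffs_C {a : ℚ} (ha : 0 ≤ a) : NonnegCoeffs (Polynomial.C a) := by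
  intro n
  rw [Polynomial.coeff_C]
  split_ifs <;> simp [ha]

lemma NonnegCoeffs.pow {p : Polynomial ℚ} (hp : NonnegCoeffs p) (n : ℕ) :
    NonnegCoeffs (p ^ n) := by
  induction n with
  | zero => simpa using nonnegCoeffs_C (zero_le_one (α := ℚ))
  | succ n ih => rw [pow_succ]; exact ih.mul hp

lemma nonnegCoeffs_risingPoly (k : ℕ) : NonnegCoeffs (risingPoly k) := by
  induction k with
  | zero => simpa [risingPoly] using nonnegCoeffs_C (zero_le_one (α := ℚ))
  | succ k ih =>
    have h : risingPoly (k + 1) = risingPoly k * (Polynomial.X + Polynomial.C (k : ℚ)) := by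
      simp only [risingPoly, Finset.prod_range_succ]
    rw [h]
    refine ih.mul fun n => ?_
    rw [Polynomial.coeff_add, Polynomial.coeff_X]
    exact add_nonneg (by split_ifs <;> simp) (nonnegCoeffs_C (Nat.cast_nonneg k) n)

lemma nonnegCoeffs_binomPoly (N H : ℕ) : NonnegCoeffs (binomPoly N H) := by
  unfold binomPoly
  split_ifs
  · simpa using nonnegCoeffs_C (zero_le_one (α := ℚ))
  · exact (((nonnegCoeffs_C (by positivity)).mul (nonnegCoeffs_risingPoly _)).pow _).mul
      ((nonnegCoeffs_C (by positivity)).mul (nonnegCoeffs_risingPoly _))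

lemma NonnegCoeffs.abs_eval_le {p : Polynomial ℚ} (hp : NonnegCoeffs p) (x : ℚ) :
    |p.eval x| ≤ p.eval |x| := by
  rw [Polynomial.eval_eq_sum_range, Polynomial.eval_eq_sum_range]
  refine (Finset.abs_sum_le_sum_abs _ _).trans (le_of_eq ?_)
  refine Finset.sum_congr rfl fun i _ => ?_
  rw [abs_mul, abs_pow, abs_of_nonneg (hp i)]

lemma NonnegCoeffs.eval_nonneg {p : Polynomial ℚ} (hp : NonnegCoeffs p) {x : ℚ} (hx : 0 ≤ x) :
    0 ≤ p.eval x := by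
  rw [Polynomial.eval_eq_sum_range]
  exact Finset.sum_nonneg fun i _ => mul_nonneg (hp i) (pow_nonneg hx i)

lemma NonnegCoeffs.hasseDeriv {p : Polynomial ℚ} (hp : NonnegCoeffs p) (u : ℕ) :
    NonnegCoeffs (Polynomial.hasseDeriv u p) := by
  intro n
  rw [Polynomial.hasseDeriv_coeff]
  exact mul_nonneg (Nat.cast_nonneg _) (hp _)

/-- A single Hasse derivative at `y ≥ 0` is one nonnegative term of the Taylor expansion of
`p (y + 1)` around `y`. -/
lemma NonnegCoeffs.eval_hasseDeriv_le {p : Polynomial ℚ} (hp : NonnegCoeffs p) (u : ℕ) {y : ℚ}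
    (hy : 0 ≤ y) : (Polynomial.hasseDeriv u p).eval y ≤ p.eval (y + 1) := by
  have hc : NonnegCoeffs (Polynomial.taylor y p) := by
    intro n
    rw [Polynomial.taylor_coeff]
    exact (hp.hasseDeriv n).eval_nonneg hy
  have h1 : p.eval (y + 1) = (Polynomial.taylor y p).eval 1 := by
    rw [Polynomial.taylor_eval, add_comm]
  rw [h1, ← Polynomial.taylor_coeff, Polynomial.eval_eq_sum_range]
  simp only [one_pow, mul_one]
  by_cases hu : u ≤ (Polynomial.taylor y p).natDegree
  · exact Finset.single_le_sum (f := fun i => (Polynomial.taylor y p).coeff i)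
      (fun i _ => hc i) (Finset.mem_range.2 (Nat.lt_succ_of_le hu))
  · rw [Polynomial.coeff_eq_zero_of_natDegree_lt (not_le.1 hu)]
    exact Finset.sum_nonneg fun i _ => hc i

lemma abs_eval_iterate_derivative_le {p : Polynomial ℚ} (hp : NonnegCoeffs p) (u : ℕ) (x : ℚ) :
    |(Polynomial.derivative^[u] p).eval x| ≤ (u.factorial : ℚ) * p.eval (|x| + 1) := by
  have h : (Polynomial.derivative^[u] p).eval x
      = (u.factorial : ℚ) * (Polynomial.hasseDeriv u p).eval x := by
    rw [← Polynomial.factorial_smul_hasseDeriv]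
    simp
  rw [h, abs_mul, abs_of_nonneg (Nat.cast_nonneg (α := ℚ) u.factorial)]
  gcongr
  exact ((hp.hasseDeriv u).abs_eval_le x).trans (hp.eval_hasseDeriv_le u (abs_nonneg x))

lemma sum_choose_mul_factorial_lt (σ : ℕ) :
    ∑ u ∈ Finset.range (σ + 1), (σ.choose u : ℝ) * (u.factorial : ℝ)
      < (σ : ℝ) ^ σ * Real.exp 1 := by
  have h1 : ∑ u ∈ Finset.range (σ + 1), (σ.choose u : ℝ) * (u.factorial : ℝ)
      = (σ.factorial : ℝ) * ∑ k ∈ Finset.range (σ + 1), (1 : ℝ) ^ k / (k.factorial : ℝ) := by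
    rw [← Finset.sum_range_reflect (fun k => (1 : ℝ) ^ k / (k.factorial : ℝ)), Finset.mul_sum]
    refine Finset.sum_congr rfl fun u hu => ?_
    have hu' : u ≤ σ := Nat.lt_succ_iff.1 (Finset.mem_range.1 hu)
    have h := Nat.choose_mul_factorial_mul_factorial hu'
    have e : σ + 1 - 1 - u = σ - u := by omega
    rw [e, ← h]
    have : ((σ - u).factorial : ℝ) ≠ 0 := by positivity
    push_cast
    field_simp
    simp
  -- Strictness: one further term of the exponential series is still below `e`.
  have h2 : ∑ k ∈ Finset.range (σ + 1), (1 : ℝ) ^ k / (k.factorial : ℝ) < Real.exp 1 := by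
    have h := Real.sum_le_exp_of_nonneg (zero_le_one (α := ℝ)) (σ + 2)
    rw [Finset.sum_range_succ] at h
    have : (0 : ℝ) < 1 ^ (σ + 1) / ((σ + 1).factorial : ℝ) := by positivity
    linarith
  have h3 : (σ.factorial : ℝ) ≤ (σ : ℝ) ^ σ := by exact_mod_cast Nat.factorial_le_pow σ
  have h4 : (0 : ℝ) < σ.factorial := by positivity
  rw [h1]
  calc _ < (σ.factorial : ℝ) * Real.exp 1 := by gcongr
    _ ≤ _ := by gcongr

lemma eval_block_le {k H : ℕ} (hH : 1 ≤ H) (hk : k ≤ H) {y : ℚ} (hy : 0 ≤ y) :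
    (((Polynomial.C ((k.factorial : ℚ)⁻¹) * risingPoly k).eval (y + 1) : ℚ) : ℝ)
      ≤ Real.exp H * (1 + (y : ℝ) / H) ^ k := by
  have hyR : (0 : ℝ) ≤ y := by exact_mod_cast hy
  have hHR : (0 : ℝ) < H := by exact_mod_cast hH
  have hprod : (risingPoly k).eval (y + 1) ≤ (y + H) ^ k := by
    rw [risingPoly, Polynomial.eval_prod]
    calc _ ≤ ∏ _j ∈ Finset.range k, (y + H) := by
          refine Finset.prod_le_prod (fun j _ => ?_) fun j hj => ?_
          · simp only [Polynomial.eval_add, Polynomial.eval_X, Polynomial.eval_C]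
            positivity
          · simp only [Polynomial.eval_add, Polynomial.eval_X, Polynomial.eval_C]
            have : j + 1 ≤ H := (Finset.mem_range.1 hj).trans_le hk
            have : (j : ℚ) + 1 ≤ H := by exact_mod_cast this
            linarith
      _ = _ := by simp
  have hprodR : (((risingPoly k).eval (y + 1) : ℚ) : ℝ) ≤ ((y : ℝ) + H) ^ k := by
    exact_mod_cast hprod
  have hexp := Real.pow_div_factorial_le_exp (H : ℝ) hHR.le k
  rw [Polynomial.eval_mul, Polynomial.eval_C]
  push_cast
  calc (k.factorial : ℝ)⁻¹ * (((risingPoly k).eval (y + 1) : ℚ) : ℝ)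
      ≤ (k.factorial : ℝ)⁻¹ * ((y : ℝ) + H) ^ k := by gcongr
    _ = (H : ℝ) ^ k / (k.factorial : ℝ) * (1 + (y : ℝ) / H) ^ k := by
        have : (y : ℝ) + H = H * (1 + (y : ℝ) / H) := by field_simp; ring
        rw [this, mul_pow]
        ring
    _ ≤ _ := by gcongr

lemma eval_binomPoly_le {N H : ℕ} (hN : 1 ≤ N) (hH : 1 ≤ H) {y : ℚ} (hy : 0 ≤ y) :
    Real.exp 1 * (((binomPoly N H).eval (y + 1) : ℚ) : ℝ)
      ≤ Real.exp (N + H) * (1 + (y : ℝ) / H) ^ N := by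
  have hyR : (0 : ℝ) ≤ y := by exact_mod_cast hy
  rw [binomPoly, if_neg (by omega)]
  have hq : (N - 1) / H * H ≤ N - 1 := Nat.div_mul_le_self _ _
  have hq2 : N - 1 < (N - 1) / H * H + H := Nat.lt_div_mul_add hH
  generalize (N - 1) / H = q at *
  obtain ⟨r, hr⟩ : ∃ r, r = N - q * H := ⟨_, rfl⟩
  rw [← hr]
  have hNqr : N = H * q + r := by rw [mul_comm H q]; omega
  have hr1 : (1 : ℝ) ≤ r := by
    have : 1 ≤ r := by omega
    exact_mod_cast this
  have h1 := eval_block_le hH le_rfl hy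
  have h2 := eval_block_le (k := r) hH (by omega) hy
  have nn : ∀ k : ℕ, (0 : ℝ) ≤
      (((Polynomial.C ((k.factorial : ℚ)⁻¹) * risingPoly k).eval (y + 1) : ℚ) : ℝ) := by
    intro k
    exact_mod_cast ((nonnegCoeffs_C (by positivity)).mul
      (nonnegCoeffs_risingPoly k)).eval_nonneg (by positivity)
  rw [Polynomial.eval_mul, Polynomial.eval_pow, Rat.cast_mul, Rat.cast_pow]
  calc _ ≤ Real.exp r * ((Real.exp H * (1 + (y : ℝ) / H) ^ H) ^ q *
        (Real.exp H * (1 + (y : ℝ) / H) ^ r)) := by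
        gcongr
        · exact mul_nonneg (pow_nonneg (nn H) q) (nn r)
        · exact nn r
        · exact nn H
    _ = (Real.exp r * (Real.exp H) ^ q * Real.exp H) * (1 + (y : ℝ) / H) ^ (H * q + r) := by
        rw [mul_pow, ← pow_mul, pow_add]
        ring
    _ = _ := by
        rw [← Real.exp_nat_mul, ← Real.exp_add, ← Real.exp_add, hNqr]
        congr 2
        push_cast
        ring

/-- **Lemma 4, estimate (4.3).** For integers `N ≥ 1`, `H ≥ 1`, `σ ≥ 0` and `x`:
`∑_{u=0}^{σ} C(σ,u) |Δ^{(u)}(x, N, H)| < σ^σ e^{N+H} (1 + |x|/H)^N`. -/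
theorem binomPoly_deriv_sum_bound (N H : ℕ) (hN : 1 ≤ N) (hH : 1 ≤ H)
    (σ : ℕ) (x : ℤ) :
    ∑ u ∈ Finset.range (σ + 1), (σ.choose u : ℝ) *
        |(Polynomial.eval (x : ℚ) (Polynomial.derivative^[u] (binomPoly N H)) : ℚ)| <
      (σ : ℝ) ^ σ * Real.exp (N + H) * (1 + |(x : ℝ)| / H) ^ N := by
  have hP := nonnegCoeffs_binomPoly N H
  have hB := eval_binomPoly_le hN hH (abs_nonneg (x : ℚ))
  have hB0 : (0 : ℝ) ≤ (((binomPoly N H).eval (|(x : ℚ)| + 1) : ℚ) : ℝ) := by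
    exact_mod_cast hP.eval_nonneg (by positivity)
  have hx : ((|(x : ℚ)| : ℚ) : ℝ) = |(x : ℝ)| := by push_cast; rfl
  rw [hx] at hB
  generalize hM : (((binomPoly N H).eval (|(x : ℚ)| + 1) : ℚ) : ℝ) = M at hB hB0
  have hσ := sum_choose_mul_factorial_lt σ
  have hsum : ∑ u ∈ Finset.range (σ + 1), (σ.choose u : ℝ) *
        |(Polynomial.eval (x : ℚ) (Polynomial.derivative^[u] (binomPoly N H)) : ℚ)|
      ≤ (∑ u ∈ Finset.range (σ + 1), (σ.choose u : ℝ) * (u.factorial : ℝ)) * M := by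
    rw [Finset.sum_mul]
    refine Finset.sum_le_sum fun u _ => ?_
    rw [mul_assoc]
    gcongr
    rw [← hM]
    exact_mod_cast abs_eval_iterate_derivative_le hP u (x : ℚ)
  have hσ0 : (0 : ℝ) < (σ : ℝ) ^ σ := by
    have h := Nat.factorial_le_pow σ
    exact_mod_cast (Nat.factorial_pos σ).trans_le h
  have hR : (0 : ℝ) < Real.exp (N + H) * (1 + |(x : ℝ)| / H) ^ N := by positivity
  refine hsum.trans_lt ?_
  rw [mul_assoc]
  -- `M = 0` is separated, since the strict inequality on the combinatorial sum needs `M > 0`.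
  rcases hB0.eq_or_lt with h0 | h0
  · rw [← h0, mul_zero]
    positivity
  · calc _ < (σ : ℝ) ^ σ * Real.exp 1 * M := by gcongr
      _ ≤ _ := by rw [mul_assoc]; gcongr
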